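/- Let G be a finite group with a normal subgroup V such that V is an elementary abelian 2-group, the quotient W = G/V is an elementary abelian 2-group, and V is of maximal rank in G. Assume moreover that the conjugation action of G on V permutes a basis, i.e. there is a subset B ⊆ V which is an 𝔽₂-basis of V (so |B| = rank V and B generates V) such that for every g ∈ G conjugation by g maps B onto B. Then rank(W) ≤ rank(V) + rank(V ∩ Z(G)). -/

import Mathlib

/-- A subgroup is an elementary abelian 2-group: every element squares to the
identity (such a subgroup is automatically abelian). -/
def IsElemAbelian2 {G : Type*} [Group G] (A : Subgroup G) : Prop :=
  (∀ a ∈ A, a * a = 1) ∧ ∀ a ∈ A, ∀ b ∈ A, a * b = b * a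

/-- A subgroup `V` of `G` has maximal rank if every elementary abelian
2-subgroup `A` of `G` satisfies `|A| ≤ |V|`. -/
def IsMaximalRank2 {G : Type*} [Group G] (V : Subgroup G) : Prop :=
  ∀ A : Subgroup G, IsElemAbelian2 A → Nat.card A ≤ Nat.card V

/-!
Let `C` be the centralizer of `V` and `Z = V ⊓ center G`. Squaring sends `C` into `Z`, and by
maximality of the rank `V` contains every involution of `C`. Squaring therefore induces a quadratic
map from `C / V` to `Z` over `𝔽₂` with no nontrivial zero, and Chevalley–Warning gives
`|C / V| ≤ |Z| ^ 2`.

The abelian group `G / C` acts faithfully on the basis `B`. In an abelian permutation group an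
element is determined by the images of representatives of the orbits, so that
`|G / C| ≤ ∏ |ω| ≤ ∏ 2 ^ (|ω| - 1) = |V| / 2 ^ r`, where `ω` runs over the `r` orbits on `B`. A
vector fixed by `G` has coordinates constant on the orbits, so `|Z| ≤ 2 ^ r`. Hence
`|G / C| * |Z| ≤ |V|`, and `|W| = |C / V| * |G / C| ≤ |Z| * |V|`.
-/

section Quadratic

open MvPolynomial

theorem exists_ne_zero_forall_eval_eq_zero {K σ ι : Type*} [Field K] [Finite K] [Fintype σ]
    [Fintype ι] (f : ι → MvPolynomial σ K) (h0 : ∀ i, eval 0 (f i) = 0)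
    (hdeg : ∑ i, (f i).totalDegree < Fintype.card σ) : ∃ x ≠ 0, ∀ i, eval x (f i) = 0 := by
  classical
  have := Fintype.ofFinite K
  obtain ⟨p, _⟩ := CharP.exists K
  by_contra! h
  have hiff (x : σ → K) : (∀ i, eval x (f i) = 0) ↔ x = 0 :=
    ⟨fun hx ↦ by_contra fun hne ↦ (h x hne).elim fun i hi ↦ hi (hx i), fun hx ↦ hx ▸ h0⟩
  have hdvd := char_dvd_card_solutions_of_fintype_sum_lt p hdeg
  simp only [hiff, Fintype.card_unique, Nat.dvd_one] at hdvd
  exact CharP.char_ne_one K p hdvd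

theorem exists_isHomogeneous_two_eval_eq {R M σ : Type*} [CommRing R] [AddCommGroup M]
    [Module R M] [Finite σ] (b : Module.Basis σ R M) (Q : QuadraticForm R M) :
    ∃ f : MvPolynomial σ R, f.IsHomogeneous 2 ∧ ∀ v, eval (b.repr v) f = Q v := by
  have := Fintype.ofFinite σ
  have := Module.Free.of_basis b
  obtain ⟨B, rfl⟩ := LinearMap.BilinMap.toQuadraticMap_surjective Q
  refine ⟨∑ i, ∑ j, C (B (b i) (b j)) * (X i * X j), ?_, fun v ↦ ?_⟩
  · exact .sum _ _ _ fun i _ ↦ .sum _ _ _ fun j _ ↦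
      ((isHomogeneous_X R i).mul (isHomogeneous_X R j)).C_mul _
  · rw [LinearMap.BilinMap.toQuadraticMap_apply, ← LinearMap.sum_repr_mul_repr_mul b b v v,
      Finsupp.sum_fintype _ _ (by simp)]
    simp [Finsupp.sum_fintype, mul_comm, mul_left_comm, mul_assoc]

theorem exists_ne_zero_map_eq_zero_of_two_mul_finrank_lt {K U M : Type*} [Field K] [Finite K]
    [AddCommGroup U] [Module K U] [Module.Finite K U] [AddCommGroup M] [Module K M]
    [Module.Finite K M] (Q : QuadraticMap K U M)
    (h : 2 * Module.finrank K M < Module.finrank K U) : ∃ u ≠ 0, Q u = 0 := by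
  let b := Module.finBasis K U
  let e := Module.finBasis K M
  choose f hf heval using fun k ↦
    exists_isHomogeneous_two_eval_eq b ((e.coord k).compQuadraticMap Q)
  have hdeg : ∑ k, (f k).totalDegree < Fintype.card (Fin (Module.finrank K U)) :=
    calc ∑ k, (f k).totalDegree ≤ ∑ _k : Fin (Module.finrank K M), 2 :=
          Finset.sum_le_sum fun k _ ↦ (hf k).totalDegree_le
      _ = 2 * Module.finrank K M := by simp [mul_comm]
      _ < _ := by rwa [Fintype.card_fin]
  have h0 (k) : eval 0 (f k) = 0 := by simpa using heval k 0
  obtain ⟨x, hx, hfx⟩ := exists_ne_zero_forall_eval_eq_zero f h0 hdeg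
  refine ⟨b.equivFun.symm x, b.equivFun.symm.map_ne_zero_iff.mpr hx, e.ext_elem fun k ↦ ?_⟩
  have := heval k (b.equivFun.symm x)
  rw [← b.equivFun_apply, LinearEquiv.apply_symm_apply, hfx k] at this
  simpa using this.symm

/-- A map between elementary abelian 2-groups, written additively, is a quadratic map as soon as its
polar form is additive: over `ZMod 2` the scalar conditions are automatic. -/
def quadraticMapOfPolarAdd {U M : Type*} [AddCommGroup U] [Module (ZMod 2) U] [AddCommGroup M]
    [Module (ZMod 2) M] (f : U → M) (h0 : f 0 = 0)
    (hadd : ∀ x x' y, QuadraticMap.polar f (x + x') y =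
      QuadraticMap.polar f x y + QuadraticMap.polar f x' y) : QuadraticMap (ZMod 2) U M :=
  .ofPolar f
    (fun a x ↦ by
      obtain rfl | rfl : a = 0 ∨ a = 1 := by decide +revert
      all_goals simp [h0])
    hadd
    (fun a x y ↦ ZMod.map_smul (AddMonoidHom.mk' (QuadraticMap.polar f · y) (hadd · · y)) a x)

theorem natCard_eq_two_pow_finrank (U : Type*) [AddCommGroup U] [Module (ZMod 2) U] [Finite U] :
    Nat.card U = 2 ^ Module.finrank (ZMod 2) U := by
  simpa using Module.natCard_eq_pow_finrank (K := ZMod 2) (V := U)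

theorem card_le_card_sq_of_polar_add {U M : Type*} [AddCommGroup U] [Module (ZMod 2) U] [Finite U]
    [AddCommGroup M] [Module (ZMod 2) M] [Finite M] {f : U → M}
    (hf : ∀ u, f u = 0 ↔ u = 0)
    (hadd : ∀ x x' y, QuadraticMap.polar f (x + x') y =
      QuadraticMap.polar f x y + QuadraticMap.polar f x' y) :
    Nat.card U ≤ Nat.card M ^ 2 := by
  have hrank : Module.finrank (ZMod 2) U ≤ 2 * Module.finrank (ZMod 2) M := by
    by_contra! hlt
    obtain ⟨u, hu, hfu⟩ := exists_ne_zero_map_eq_zero_of_two_mul_finrank_lt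
      (quadraticMapOfPolarAdd f ((hf 0).mpr rfl) hadd) hlt
    exact hu ((hf u).mp hfu)
  calc Nat.card U = 2 ^ Module.finrank (ZMod 2) U := natCard_eq_two_pow_finrank U
    _ ≤ 2 ^ (2 * Module.finrank (ZMod 2) M) := Nat.pow_le_pow_right two_pos hrank
    _ = Nat.card M ^ 2 := by rw [natCard_eq_two_pow_finrank M, ← pow_mul, mul_comm]

end Quadratic

section MulSelf

variable {A : Type*}

theorem commute_of_forall_mul_self [Group A] (h : ∀ a : A, a * a = 1) (a b : A) : Commute a b :=
  .of_orderOf_dvd_two (fun c ↦ orderOf_dvd_of_pow_eq_one (by rw [sq, h])) a b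

/-- The commutative group structure on a group of exponent two, extending the given group structure
so that no transport is needed. -/
abbrev commGroupOfMulSelf [Group A] (h : ∀ a : A, a * a = 1) : CommGroup A where
  mul_comm := commute_of_forall_mul_self h

/-- A commutative group of exponent two, written additively, as a vector space over `ZMod 2`. -/
abbrev zmodModuleOfMulSelf [CommGroup A] (h : ∀ a : A, a * a = 1) :
    Module (ZMod 2) (Additive A) :=
  AddCommGroup.zmodModule fun a ↦ (two_nsmul a).trans (h a.toMul)

end MulSelf

section Squaring

open Subgroup
open scoped commutatorElement

variable {G : Type*} [Group G]

theorem commutatorElement_mem_of_forall_mul_self {N : Subgroup G} [N.Normal]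
    (h : ∀ w : G ⧸ N, w * w = 1) (x y : G) : ⁅x, y⁆ ∈ N := by
  rw [← QuotientGroup.eq_one_iff, ← QuotientGroup.mk'_apply, map_commutatorElement,
    commutatorElement_eq_one_iff_commute]
  exact commute_of_forall_mul_self h _ _

theorem commutatorElement_mul_right_of_mem_center {x y z : G} (h : ⁅x, z⁆ ∈ center G) :
    ⁅x, y * z⁆ = ⁅x, y⁆ * ⁅x, z⁆ := by
  rw [commutatorElement_mul_right_eq_mul_conj, mul_assoc _ y, mem_center_iff.mp h, mul_assoc,
    mul_inv_cancel_right]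

theorem mul_self_mul_div_of_commutatorElement_mem_center {x y : G} (h : ⁅y, x⁆ ∈ center G) :
    x * y * (x * y) / (y * y) / (x * x) = ⁅y, x⁆ := by
  have hyx : y * x = ⁅y, x⁆ * (x * y) := by simp [commutatorElement_def, mul_assoc]
  calc x * y * (x * y) / (y * y) / (x * x) = x * (y * x) * y⁻¹ * (x * x)⁻¹ := by
        rw [div_eq_mul_inv, div_eq_mul_inv]
        group
    _ = ⁅y, x⁆ * x * (x * y) * y⁻¹ * (x * x)⁻¹ := by
      rw [hyx, ← mul_assoc x, mem_center_iff.mp h]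
    _ = ⁅y, x⁆ := by group

/-- The squaring map `x ↦ x * x` with values in `Z`, as a map on the quotient by a central subgroup
`N` of exponent two. It becomes a quadratic map over `ZMod 2` once `G ⧸ N` and `Z` are elementary
abelian. -/
def quotientMulSelf {N Z : Subgroup G} (hN : N ≤ center G) (hN2 : ∀ n ∈ N, n * n = 1)
    (hZ : ∀ x : G, x * x ∈ Z) : G ⧸ N → Z :=
  Quotient.lift (fun x ↦ ⟨x * x, hZ x⟩) fun x y hxy ↦ Subtype.ext <| by
    obtain ⟨n, hn, rfl⟩ : ∃ n ∈ N, y = x * n :=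
      ⟨x⁻¹ * y, QuotientGroup.leftRel_apply.mp hxy, (mul_inv_cancel_left x y).symm⟩
    have hcomm : Commute n x := (mem_center_iff.mp (hN hn) x).symm
    calc x * x = x * x * (n * n) := by rw [hN2 n hn, mul_one]
      _ = x * n * (x * n) := (hcomm.mul_mul_mul_comm x n).symm

theorem index_le_card_sq_of_forall_mul_self_mem [Finite G] {N Z : Subgroup G} (hN : N ≤ center G)
    (hN2 : ∀ x : G, x ∈ N ↔ x * x = 1) (hZN : Z ≤ N) (hZ : ∀ x : G, x * x ∈ Z) :
    N.index ≤ Nat.card Z ^ 2 := by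
  have : N.Normal := ⟨fun n hn g ↦ by rwa [mem_center_iff.mp (hN hn), mul_inv_cancel_right]⟩
  have hQ (w : G ⧸ N) : w * w = 1 := by
    induction w using QuotientGroup.induction_on with
    | H x => exact (QuotientGroup.eq_one_iff _).mpr (hZN (hZ x))
  have hZ2 (z : Z) : z * z = 1 := Subtype.ext ((hN2 z).mp (hZN z.2))
  have hcentral (x y : G) : ⁅x, y⁆ ∈ center G :=
    hN (commutatorElement_mem_of_forall_mul_self hQ x y)
  let := commGroupOfMulSelf hQ
  let := commGroupOfMulSelf hZ2
  let := zmodModuleOfMulSelf hQ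
  let := zmodModuleOfMulSelf hZ2
  let f (w : Additive (G ⧸ N)) : Additive Z :=
    .ofMul (quotientMulSelf hN (fun n hn ↦ (hN2 n).mp hn) hZ w.toMul)
  have hpolar (x y : G) :
      ((QuadraticMap.polar f (.ofMul (x : G ⧸ N)) (.ofMul (y : G ⧸ N))).toMul : G) = ⁅y, x⁆ := by
    rw [QuadraticMap.polar, sub_right_comm]
    exact mul_self_mul_div_of_commutatorElement_mem_center (hcentral y x)
  refine card_le_card_sq_of_polar_add (U := Additive (G ⧸ N)) (M := Additive Z) (f := f) ?_ ?_
  · rintro ⟨x⟩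
    exact Subtype.ext_iff.trans ((hN2 x).symm.trans (QuotientGroup.eq_one_iff x).symm)
  · rintro ⟨x⟩ ⟨x'⟩ ⟨y⟩
    refine Subtype.ext ?_
    have := commutatorElement_mul_right_of_mem_center (y := x) (hcentral y x')
    rw [← hpolar, ← hpolar, ← hpolar] at this
    exact this

end Squaring

section Permutation

open MulAction

variable {G X : Type*} [Group G] [MulAction G X]

theorem exists_smul_out_eq (x : X) :
    ∃ g : G, g • (Quotient.mk'' x : orbitRel.Quotient G X).out = x :=
  (orbitRel G X).symm (Quotient.mk_out (s := orbitRel G X) x)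

theorem index_ker_toPermHom_le_prod_card_orbit [Finite X] [Fintype (orbitRel.Quotient G X)]
    (hcomm : ∀ (g h : G) (x : X), g • h • x = h • g • x) :
    (toPermHom G X).ker.index ≤ ∏ ω : orbitRel.Quotient G X, Nat.card (orbit G ω.out) := by
  let F (σ : (toPermHom G X).range) (ω : orbitRel.Quotient G X) : orbit G ω.out :=
    ⟨σ.1 ω.out, by obtain ⟨_, g, rfl⟩ := σ; exact ⟨g, rfl⟩⟩
  have hF : Function.Injective F := by
    rintro ⟨_, g, rfl⟩ ⟨_, h, rfl⟩ hgh
    refine Subtype.ext (Equiv.ext fun x ↦ ?_)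
    obtain ⟨k, hk⟩ := exists_smul_out_eq (G := G) x
    set y := (Quotient.mk'' x : orbitRel.Quotient G X).out
    have hy : g • y = h • y := congrArg Subtype.val (congrFun hgh (Quotient.mk'' x))
    calc g • x = k • g • y := by rw [← hk, hcomm]
      _ = h • x := by rw [hy, hcomm, hk]
  rw [Subgroup.index_ker, ← Nat.card_pi]
  exact Nat.card_le_card_of_injective F hF

theorem mul_two_le_two_pow {n : ℕ} (hn : n ≠ 0) : n * 2 ≤ 2 ^ n := by
  obtain ⟨k, rfl⟩ := Nat.exists_eq_succ_of_ne_zero hn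
  rw [pow_succ]
  exact Nat.mul_le_mul_right _ k.lt_two_pow_self

theorem index_ker_toPermHom_mul_two_pow_card_orbits_le [Finite X]
    (hcomm : ∀ (g h : G) (x : X), g • h • x = h • g • x) :
    (toPermHom G X).ker.index * 2 ^ Nat.card (orbitRel.Quotient G X) ≤ 2 ^ Nat.card X := by
  have := Fintype.ofFinite (orbitRel.Quotient G X)
  calc (toPermHom G X).ker.index * 2 ^ Nat.card (orbitRel.Quotient G X)
      ≤ (∏ ω : orbitRel.Quotient G X, Nat.card (orbit G ω.out)) *
          2 ^ Nat.card (orbitRel.Quotient G X) :=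
        Nat.mul_le_mul_right _ (index_ker_toPermHom_le_prod_card_orbit hcomm)
    _ = ∏ ω : orbitRel.Quotient G X, Nat.card (orbit G ω.out) * 2 := by
        rw [Finset.prod_mul_distrib, Finset.prod_const, Finset.card_univ, Nat.card_eq_fintype_card]
    _ ≤ ∏ ω : orbitRel.Quotient G X, 2 ^ Nat.card (orbit G ω.out) :=
        Finset.prod_le_prod' fun ω _ ↦
          mul_two_le_two_pow (Nat.card_ne_zero.mpr ⟨(nonempty_orbit _).to_subtype, inferInstance⟩)
    _ = 2 ^ Nat.card X := by
        rw [Finset.prod_pow_eq_pow_sum, ← Nat.card_sigma, Nat.card_congr (selfEquivSigmaOrbits G X)]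

section Representation

variable {k M : Type*} [CommRing k] [AddCommGroup M] [Module k M] {ρ : Representation k G M}
  {b : Module.Basis X k M}

theorem repr_apply_smul (hb : ∀ g x, ρ g (b x) = b (g • x)) (g : G) (v : M) (x : X) :
    b.repr (ρ g v) (g • x) = b.repr v x := by
  classical
  have h : b.coord (g • x) ∘ₗ ρ g = b.coord x :=
    b.ext fun y ↦ by simp [hb, Finsupp.single_apply]
  exact LinearMap.congr_fun h v

theorem finrank_invariants_le_card_orbits [StrongRankCondition k] [Finite X]
    (hb : ∀ g x, ρ g (b x) = b (g • x)) :
    Module.finrank k ρ.invariants ≤ Nat.card (orbitRel.Quotient G X) := by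
  have := Fintype.ofFinite (orbitRel.Quotient G X)
  let φ : ρ.invariants →ₗ[k] orbitRel.Quotient G X → k :=
    LinearMap.pi fun ω ↦ b.coord ω.out ∘ₗ ρ.invariants.subtype
  have hφ : Function.Injective φ := fun v w hvw ↦ Subtype.ext <| b.ext_elem fun x ↦ by
    obtain ⟨g, hg⟩ := exists_smul_out_eq (G := G) x
    rw [← hg, ← v.2 g, ← w.2 g, repr_apply_smul hb, repr_apply_smul hb]
    exact congrFun hvw (Quotient.mk'' x)
  simpa [Nat.card_eq_fintype_card] using LinearMap.finrank_le_finrank_of_injective hφ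

end Representation

theorem exists_basis_coe_eq_of_closure_eq_top {p : ℕ} [Fact p.Prime] {M : Type*} [AddCommGroup M]
    [Module (ZMod p) M] [Finite M] [Finite X] {v : X → M}
    (hv : AddSubgroup.closure (Set.range v) = ⊤) (hcard : Nat.card M = p ^ Nat.card X) :
    ∃ b : Module.Basis X (ZMod p) M, ⇑b = v := by
  have := Fintype.ofFinite X
  have hspan : ⊤ ≤ Submodule.span (ZMod p) (Set.range v) := by
    have hle : AddSubgroup.closure (Set.range v) ≤
        (Submodule.span (ZMod p) (Set.range v)).toAddSubgroup :=
      (AddSubgroup.closure_le _).mpr Submodule.subset_span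
    rwa [hv] at hle
  have hrank : Fintype.card X = Module.finrank (ZMod p) M := by
    rw [Module.natCard_eq_pow_finrank (K := ZMod p), Nat.card_zmod] at hcard
    rw [← Nat.card_eq_fintype_card]
    exact (Nat.pow_right_injective (Fact.out : p.Prime).two_le hcard).symm
  exact ⟨basisOfTopLeSpanOfCardEqFinrank v hspan hrank,
    coe_basisOfTopLeSpanOfCardEqFinrank v hspan hrank⟩

/-- The linear representation over `ZMod n` underlying an action by automorphisms on a commutative
group of exponent dividing `n`. -/
def zmodRepresentation (n : ℕ) {A : Type*} [CommGroup A] [Module (ZMod n) (Additive A)]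
    (φ : G →* MulAut A) : Representation (ZMod n) G (Additive A) where
  toFun g := (φ g).toMonoidHom.toAdditive.toZModLinearMap n
  map_one' := by ext; simp
  map_mul' g h := by ext; simp

theorem card_fixed_le_two_pow_card_orbits {A : Type*} [Group A] [Finite A] [Finite X]
    (hA : ∀ a : A, a * a = 1) {φ : G →* MulAut A} {b : X → A}
    (hgen : Subgroup.closure (Set.range b) = ⊤) (hcard : Nat.card A = 2 ^ Nat.card X)
    (hb : ∀ g x, φ g (b x) = b (g • x)) :
    Nat.card {a : A // ∀ g, φ g a = a} ≤ 2 ^ Nat.card (orbitRel.Quotient G X) := by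
  let := commGroupOfMulSelf hA
  let := zmodModuleOfMulSelf hA
  have hclosure : AddSubgroup.closure (Set.range fun x ↦ Additive.ofMul (b x)) = ⊤ := by
    have := congrArg Subgroup.toAddSubgroup hgen
    rw [Subgroup.toAddSubgroup_closure] at this
    exact this
  obtain ⟨β, hβ⟩ := exists_basis_coe_eq_of_closure_eq_top (p := 2) hclosure hcard
  let ρ := zmodRepresentation 2 φ
  calc Nat.card {a : A // ∀ g, φ g a = a} = Nat.card ρ.invariants := rfl
    _ = 2 ^ Module.finrank (ZMod 2) ρ.invariants := natCard_eq_two_pow_finrank _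
    _ ≤ 2 ^ Nat.card (orbitRel.Quotient G X) :=
      Nat.pow_le_pow_right two_pos <| finrank_invariants_le_card_orbits (b := β) fun g x ↦ by
        rw [hβ]
        exact congrArg Additive.ofMul (hb g x)

end Permutation

section ElemAbelian

open Subgroup
open scoped commutatorElement

variable {G : Type*} [Group G] {V : Subgroup G}

theorem IsElemAbelian2.mul_self (hV : IsElemAbelian2 V) (v : V) : v * v = 1 :=
  Subtype.ext (hV.1 v v.2)

theorem IsElemAbelian2.le_centralizer (hV : IsElemAbelian2 V) : V ≤ centralizer (V : Set G) :=
  fun v hv ↦ mem_centralizer_iff.mpr fun w hw ↦ hV.2 w hw v hv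

theorem isElemAbelian2_of_forall_mul_self (h : ∀ a ∈ V, a * a = 1) : IsElemAbelian2 V :=
  ⟨h, fun a ha b hb ↦ congrArg Subtype.val
    (commute_of_forall_mul_self (fun v : V ↦ Subtype.ext (h v v.2)) ⟨a, ha⟩ ⟨b, hb⟩)⟩

theorem IsElemAbelian2.sup_zpowers [V.Normal] (hV : IsElemAbelian2 V) {x : G}
    (hx : x ∈ centralizer (V : Set G)) (hx2 : x * x = 1) : IsElemAbelian2 (V ⊔ zpowers x) := by
  refine isElemAbelian2_of_forall_mul_self fun a ha ↦ ?_
  obtain ⟨v, hv, _, ⟨k, rfl⟩, rfl⟩ := mem_sup_of_normal_left.mp ha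
  have hxv : Commute (x ^ k) v := Commute.zpow_left (mem_centralizer_iff.mp hx v hv).symm k
  calc v * x ^ k * (v * x ^ k) = v * v * (x ^ k * x ^ k) := hxv.mul_mul_mul_comm _ _
    _ = v * v * (x * x) ^ k := by rw [(Commute.refl x).mul_zpow]
    _ = 1 := by rw [hV.1 v hv, hx2, one_zpow, mul_one]

theorem IsMaximalRank2.mem_of_mul_self_eq_one [Finite G] [V.Normal] (hmax : IsMaximalRank2 V)
    (hV : IsElemAbelian2 V) {x : G} (hx : x ∈ centralizer (V : Set G)) (hx2 : x * x = 1) :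
    x ∈ V := by
  rw [eq_of_le_of_card_ge le_sup_left (hmax _ (hV.sup_zpowers hx hx2))]
  exact mem_sup_right (mem_zpowers x)

theorem IsElemAbelian2.mul_self_mem_center [V.Normal] (hV : IsElemAbelian2 V)
    (hW : ∀ w : G ⧸ V, w * w = 1) {x : G} (hx : x ∈ centralizer (V : Set G)) :
    x * x ∈ center G := by
  refine mem_center_iff.mpr fun g ↦ mul_inv_eq_iff_eq_mul.mp ?_
  have hgx : ⁅g, x⁆ ∈ V := commutatorElement_mem_of_forall_mul_self hW g x
  have hcomm : Commute x ⁅g, x⁆ := (mem_centralizer_iff.mp hx _ hgx).symm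
  calc g * (x * x) * g⁻¹ = ⁅g, x⁆ * x * (⁅g, x⁆ * x) := by simp [commutatorElement_def, mul_assoc]
    _ = ⁅g, x⁆ * ⁅g, x⁆ * (x * x) := hcomm.mul_mul_mul_comm _ _
    _ = x * x := by rw [hV.1 _ hgx, one_mul]

theorem relIndex_centralizer_le_card_inf_center_sq [Finite G] [V.Normal] (hV : IsElemAbelian2 V)
    (hmax : IsMaximalRank2 V) (hW : ∀ w : G ⧸ V, w * w = 1) :
    V.relIndex (centralizer (V : Set G)) ≤ Nat.card (V ⊓ center G : Subgroup G) ^ 2 := by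
  set C := centralizer (V : Set G)
  calc V.relIndex C ≤ Nat.card ((V ⊓ center G).subgroupOf C) ^ 2 :=
        index_le_card_sq_of_forall_mul_self_mem
          (fun v hv ↦ mem_center_iff.mpr fun x ↦
            Subtype.ext (mem_centralizer_iff.mp x.2 v hv).symm)
          (fun x ↦ ⟨fun hx ↦ Subtype.ext (hV.1 x hx),
            fun hx ↦ hmax.mem_of_mul_self_eq_one hV x.2 (congrArg Subtype.val hx)⟩)
          (fun _ hx ↦ hx.1)
          (fun x ↦ ⟨(QuotientGroup.eq_one_iff _).mp (hW x), hV.mul_self_mem_center hW x.2⟩)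
    _ = Nat.card (V ⊓ center G : Subgroup G) ^ 2 := by
      rw [Nat.card_congr (subgroupOfEquivOfLe (inf_le_left.trans hV.le_centralizer)).toEquiv]

theorem natCard_fixed_conjNormal [V.Normal] :
    Nat.card {v : V // ∀ g : G, MulAut.conjNormal g v = v} =
      Nat.card (V ⊓ center G : Subgroup G) := by
  have hfix (v : V) : (∀ g : G, MulAut.conjNormal g v = v) ↔ (v : G) ∈ center G := by
    simp [Subtype.ext_iff, mem_center_iff, mul_inv_eq_iff_eq_mul]
  exact Nat.card_congr ((Equiv.subtypeEquivRight hfix).trans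
    (Equiv.subtypeSubtypeEquivSubtypeInter (· ∈ V) (· ∈ center G)))

/-- The action of a group by conjugation on a conjugation-invariant subset, such as a basis
of a normal subgroup permuted by conjugation. -/
abbrev conjMulAction {B : Set G} (hB : ∀ g : G, ∀ b ∈ B, g * b * g⁻¹ ∈ B) : MulAction G B where
  smul g b := ⟨g * b * g⁻¹, hB g b b.2⟩
  one_smul b := Subtype.ext (show 1 * (b : G) * 1⁻¹ = b by group)
  mul_smul g h b :=
    Subtype.ext (show g * h * (b : G) * (g * h)⁻¹ = g * (h * b * h⁻¹) * g⁻¹ by group)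

theorem ker_toPermHom_conjMulAction {B : Set G} (hB : ∀ g : G, ∀ b ∈ B, g * b * g⁻¹ ∈ B) :
    letI := conjMulAction hB
    (MulAction.toPermHom G B).ker = centralizer B := by
  let := conjMulAction hB
  ext g
  have hfix (b : B) : g • b = b ↔ (b : G) * g = g * b :=
    Subtype.ext_iff.trans (mul_inv_eq_iff_eq_mul.trans eq_comm)
  rw [MonoidHom.mem_ker, Equiv.ext_iff, mem_centralizer_iff, Subtype.forall]
  exact forall₂_congr fun b hb ↦ hfix ⟨b, hb⟩

theorem index_centralizer_mul_card_inf_center_le [Finite G] [V.Normal] (hV : IsElemAbelian2 V)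
    (hcomm : ∀ x y : G, ⁅x, y⁆ ∈ centralizer (V : Set G)) {B : Set G}
    (hgen : closure B = V) (hcard : Nat.card V = 2 ^ Nat.card B)
    (hB : ∀ g : G, ∀ b ∈ B, g * b * g⁻¹ ∈ B) :
    (centralizer (V : Set G)).index * Nat.card (V ⊓ center G : Subgroup G) ≤ Nat.card V := by
  let := conjMulAction hB
  have hker : (MulAction.toPermHom G B).ker = centralizer (V : Set G) := by
    rw [ker_toPermHom_conjMulAction, ← hgen, centralizer_closure]
  have hsmul (g h : G) (b : B) : g • h • b = h • g • b := by
    have hgh := hker ▸ hcomm g h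
    rw [MonoidHom.mem_ker, map_commutatorElement, commutatorElement_eq_one_iff_mul_comm] at hgh
    exact Equiv.congr_fun hgh b
  have hBV : B ⊆ V := hgen ▸ subset_closure
  have hrange : closure (Set.range (Set.inclusion hBV)) = ⊤ := by
    rw [Set.range_inclusion]
    subst hgen
    exact closure_closure_coe_preimage
  have hfixed : Nat.card (V ⊓ center G : Subgroup G) ≤
      2 ^ Nat.card (MulAction.orbitRel.Quotient G B) :=
    natCard_fixed_conjNormal.symm.trans_le <|
      card_fixed_le_two_pow_card_orbits hV.mul_self hrange hcard fun g b ↦ rfl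
  calc (centralizer (V : Set G)).index * Nat.card (V ⊓ center G : Subgroup G)
      ≤ (MulAction.toPermHom G B).ker.index * 2 ^ Nat.card (MulAction.orbitRel.Quotient G B) :=
        hker ▸ Nat.mul_le_mul_left _ hfixed
    _ ≤ 2 ^ Nat.card B := index_ker_toPermHom_mul_two_pow_card_orbits_le hsmul
    _ = Nat.card V := hcard.symm

end ElemAbelian

theorem stmt0 (G : Type*) [Group G] [Finite G] (V : Subgroup G) [V.Normal]
    (hV : IsElemAbelian2 V) (hmax : IsMaximalRank2 V)
    (hW : ∀ w : G ⧸ V, w * w = 1)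
    (nV nW nZ : ℕ)
    (hnV : Nat.card V = 2 ^ nV)
    (hnW : Nat.card (G ⧸ V) = 2 ^ nW)
    (hnZ : Nat.card (V ⊓ Subgroup.center G : Subgroup G) = 2 ^ nZ)
    -- B is an 𝔽₂-basis of V: a generating subset of V of cardinality rank V
    (B : Finset G)
    (hBV : (B : Set G) ⊆ (V : Set G))
    (hBgen : Subgroup.closure (B : Set G) = V)
    (hBcard : B.card = nV)
    -- conjugation by any element of G permutes the basis B
    (hBperm : ∀ g : G, (fun b : G => g * b * g⁻¹) '' (B : Set G) = (B : Set G)) :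
    nW ≤ nV + nZ := by
  set C := Subgroup.centralizer (V : Set G)
  set Z := V ⊓ Subgroup.center G
  have hrel : V.relIndex C ≤ Nat.card Z ^ 2 :=
    relIndex_centralizer_le_card_inf_center_sq hV hmax hW
  have hindex : C.index * Nat.card Z ≤ Nat.card V :=
    index_centralizer_mul_card_inf_center_le hV
      (fun x y ↦ hV.le_centralizer (commutatorElement_mem_of_forall_mul_self hW x y))
      hBgen (by simp [hnV, hBcard]) fun g b hb ↦ hBperm g ▸ Set.mem_image_of_mem _ hb
  refine (Nat.pow_le_pow_iff_right one_lt_two).mp ?_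
  calc 2 ^ nW = V.relIndex C * C.index := by
        rw [Subgroup.relIndex_mul_index hV.le_centralizer, ← hnW, Subgroup.index]
    _ ≤ Nat.card Z ^ 2 * C.index := Nat.mul_le_mul_right _ hrel
    _ = C.index * Nat.card Z * Nat.card Z := by ring
    _ ≤ Nat.card V * Nat.card Z := Nat.mul_le_mul_right _ hindex
    _ = 2 ^ (nV + nZ) := by rw [hnV, hnZ, pow_add]
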